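/- arXiv:2507.06127 — 4 statements merged into one kernel-verified Lean document; each statement's English description precedes it below -/
import Mathlib

section
/- For all natural numbers a, b and every index i, Nat.testBit (a + b) i = (p i).xor (c i); that is, each sum bit of a + b equals the XOR of the propagate signal and the incoming carry at that position. -/
/-- Propagate signal at bit `i` for the addition of `a` and `b`. -/
def p (a b : ℕ) (i : ℕ) : Bool := (Nat.testBit a i).xor (Nat.testBit b i)

/-- Generate signal at bit `i` for the addition of `a` and `b`. -/
def g (a b : ℕ) (i : ℕ) : Bool := Nat.testBit a i && Nat.testBit b i

/-- Carry sequence: `c 0 = false`, `c (i+1) = g i || (p i && c i)`. -/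
def c (a b : ℕ) : ℕ → Bool
  | 0 => false
  | i + 1 => g a b i || (p a b i && c a b i)

/-!
A full adder rewrites three bits as `x + y + z = s + 2 * t`, with `s` their parity and `t` their
majority. Applied to the lowest bits of `a / 2 ^ i` and `b / 2 ^ i` and to the carry, it shows by
induction that `(a + b) / 2 ^ i` is `a / 2 ^ i + b / 2 ^ i` plus the carry into position `i`; the
sum bit is the parity of this number.
-/

theorem toNat_add_toNat_add_toNat_eq_bit (x y z : Bool) :
    x.toNat + y.toNat + z.toNat = Nat.bit (x ^^ y ^^ z) (x && y || (x ^^ y) && z).toNat := by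
  decide +revert

theorem add_add_toNat_eq_bit (m n : ℕ) (z : Bool) :
    m + n + z.toNat =
      Nat.bit (m.testBit 0 ^^ n.testBit 0 ^^ z)
        (m / 2 + n / 2 +
          (m.testBit 0 && n.testBit 0 || (m.testBit 0 ^^ n.testBit 0) && z).toNat) := by
  have full_adder := toNat_add_toNat_add_toNat_eq_bit (m.testBit 0) (n.testBit 0) z
  have hm : (m.testBit 0).toNat = m % 2 := by rw [Nat.toNat_testBit, pow_zero, Nat.div_one]
  have hn : (n.testBit 0).toNat = n % 2 := by rw [Nat.toNat_testBit, pow_zero, Nat.div_one]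
  simp only [Nat.bit_val] at full_adder ⊢
  omega

theorem div_two_pow_add_carry_eq_bit (a b i : ℕ) :
    a / 2 ^ i + b / 2 ^ i + (c a b i).toNat =
      Nat.bit (p a b i ^^ c a b i)
        (a / 2 ^ (i + 1) + b / 2 ^ (i + 1) + (c a b (i + 1)).toNat) := by
  rw [add_add_toNat_eq_bit]
  simp only [Nat.testBit_div_two_pow, zero_add, Nat.div_div_eq_div_mul, ← pow_succ, c, g, p]

theorem add_div_two_pow_eq_add_carry (a b i : ℕ) :
    (a + b) / 2 ^ i = a / 2 ^ i + b / 2 ^ i + (c a b i).toNat := by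
  induction i with
  | zero => simp [c]
  | succ i ih =>
    rw [pow_succ, ← Nat.div_div_eq_div_mul, ih, div_two_pow_add_carry_eq_bit, Nat.bit_div_two,
      pow_succ]

theorem testBit_add_eq_xor (a b i : ℕ) :
    Nat.testBit (a + b) i = (p a b i).xor (c a b i) := by
  calc (a + b).testBit i
      = ((a + b) / 2 ^ i).testBit 0 := by rw [Nat.testBit_div_two_pow, zero_add]
    _ = (a / 2 ^ i + b / 2 ^ i + (c a b i).toNat).testBit 0 := by
        rw [add_div_two_pow_eq_add_carry]
    _ = (p a b i).xor (c a b i) := by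
        rw [div_two_pow_add_carry_eq_bit, Nat.testBit_bit_zero]
end

section
/- For every list L : List (Bool × Bool) and every cin : Bool, co (L.foldr (· o ·) (false, true)) cin = L.foldr (fun x c => co x c) cin; that is, combining an arbitrary list of (generate, propagate) pairs with the prefix operator and then applying the carry-in gives the same result as rippling the carry through the list element by element. In particular (false, true) acts as an identity for this carry computation. -/
/-- The prefix operator `o` on (generate, propagate) pairs. -/
def prefixOp (x y : Bool × Bool) : Bool × Bool :=
  (x.1 || (x.2 && y.1), x.2 && y.2)

/-- The carry-out of a (generate, propagate) pair given a carry-in. -/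
def co (x : Bool × Bool) (cin : Bool) : Bool :=
  x.1 || (x.2 && cin)

theorem co_false_true (c : Bool) : co (false, true) c = c := rfl

theorem co_prefixOp (x y : Bool × Bool) (c : Bool) :
    co (prefixOp x y) c = co x (co y c) := by
  simp only [co, prefixOp, Bool.and_or_distrib_left, Bool.or_assoc, Bool.and_assoc]

theorem co_foldr_prefixOp (L : List (Bool × Bool)) (cin : Bool) :
    co (L.foldr (fun x y => prefixOp x y) (false, true)) cin
      = L.foldr (fun x c => co x c) cin := by
  calc co (L.foldr (fun x y => prefixOp x y) (false, true)) cin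
      = L.foldr (fun x c => co x c) (co (false, true) cin) :=
        (List.foldr_hom (co · cin) fun x y => (co_prefixOp x y cin).symm).symm
    _ = L.foldr (fun x c => co x c) cin := by rw [co_false_true]
end

section
/- For every list L : List (Bool × Bool), the generate component of the fold satisfies: (L.foldr (· o ·) (false, true)).1 = true if and only if there exists an index k < L.length such that (L.get k).1 = true and for all m < k, (L.get m).2 = true; that is, the group generates a carry exactly when some position generates and all more significant positions in the group propagate. -/
theorem prefixOp_fst_eq_true_iff (x y : Bool × Bool) :
    (prefixOp x y).1 = true ↔ x.1 = true ∨ x.2 = true ∧ y.1 = true := by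
  simp only [prefixOp, Bool.or_eq_true, Bool.and_eq_true]

theorem exists_fin_succ_and_forall_lt_iff {n : ℕ} {P Q : Fin (n + 1) → Prop} :
    (∃ k, P k ∧ ∀ m < k, Q m) ↔
      P 0 ∨ Q 0 ∧ ∃ k : Fin n, P k.succ ∧ ∀ m < k, Q m.succ := by
  simp only [Fin.exists_fin_succ, Fin.forall_fin_succ, Fin.not_lt_zero, Fin.succ_pos,
    Fin.succ_lt_succ_iff, false_imp_iff, true_imp_iff, implies_true, and_true,
    ← exists_and_left, and_left_comm]

/-- The generate bit of `z` acts as the carry into the least significant position. -/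
theorem foldr_prefixOp_generate_general (L : List (Bool × Bool)) (z : Bool × Bool) :
    (L.foldr prefixOp z).1 = true ↔
      (∃ k : Fin L.length, (L.get k).1 = true ∧ ∀ m < k, (L.get m).2 = true) ∨
        (∀ x ∈ L, x.2 = true) ∧ z.1 = true := by
  induction L with
  | nil => simp
  | cons x L ih =>
    have first_position :
        (∃ k : Fin (x :: L).length, ((x :: L).get k).1 = true ∧
            ∀ m < k, ((x :: L).get m).2 = true) ↔
          x.1 = true ∨ x.2 = true ∧
            ∃ k : Fin L.length, (L.get k).1 = true ∧ ∀ m < k, (L.get m).2 = true :=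
      exists_fin_succ_and_forall_lt_iff
    rw [List.foldr_cons, prefixOp_fst_eq_true_iff, ih, first_position, List.forall_mem_cons,
      and_or_left, or_assoc, and_assoc]

theorem foldr_prefixOp_generate (L : List (Bool × Bool)) :
    (L.foldr (fun x y => prefixOp x y) (false, true)).1 = true ↔
      ∃ k : Fin L.length, (L.get k).1 = true ∧
        ∀ m : Fin L.length, (m : ℕ) < (k : ℕ) → (L.get m).2 = true := by
  simpa using foldr_prefixOp_generate_general L (false, true)
end

section
/- For every full binary tree t over α, the fully serial (left-comb) tree built on the leaf list of t is related to t by the reflexive–transitive closure of the regroup relation R. Consequently, any two full binary trees with the same leaf list are connected by a finite sequence of regroup operations, so iterative regrouping starting from a fully serial backbone can reach every structurally valid backbone configuration on the given inputs. -/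
/-- Full binary trees over `α`. -/
inductive T (α : Type*) where
  | leaf : α → T α
  | node : T α → T α → T α

/-- In-order list of leaves of a tree. -/
def T.leaves {α : Type*} : T α → List α
  | .leaf a => [a]
  | .node l r => l.leaves ++ r.leaves

/-- The regroup (rotation) relation on full binary trees. -/
inductive R {α : Type*} : T α → T α → Prop
  | assocL (x y z : T α) : R (.node (.node x y) z) (.node x (.node y z))
  | assocR (x y z : T α) : R (.node x (.node y z)) (.node (.node x y) z)
  | congL {l l' : T α} (r : T α) : R l l' → R (.node l r) (.node l' r)
  | congR (l : T α) {r r' : T α} : R r r' → R (.node l r) (.node l r')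

/-- The fully serial (left-comb) tree on the nonempty list `a :: as`:
`serial (a :: as) = List.foldl (fun t b => node t (leaf b)) (leaf a) as`. -/
def serial {α : Type*} (a : α) (as : List α) : T α :=
  as.foldl (fun t b => T.node t (T.leaf b)) (T.leaf a)

/-!
If the leaves of `r` are attached one by one to a tree `t`, the resulting comb can be rotated into
`node t r`: for `r = node x y`, gather the leaves of `x`, then those of `y`, to reach
`node (node t x) y`, and rotate once. Applied along the right subtrees on the leftmost path of a
tree, this turns its serial tree into the tree itself. Since every rotation is reversible, the
serial tree then connects any two trees with the same leaves.
-/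

namespace T

variable {α : Type*}

theorem exists_leaves_eq_cons (t : T α) : ∃ a as, t.leaves = a :: as := by
  induction t with
  | leaf a => exact ⟨a, [], rfl⟩
  | node l r ihl _ =>
    obtain ⟨a, as, hl⟩ := ihl
    exact ⟨a, as ++ r.leaves, by rw [leaves, hl, List.cons_append]⟩

/-- The left comb with the tree `t` at the bottom of its spine and the leaves `as` attached on the
right, one after another. It generalizes `serial` by an arbitrary starting tree, which makes the
serial tree of a concatenation expressible. -/
def leftComb (t : T α) (as : List α) : T α :=
  as.foldl (fun s b => node s (leaf b)) t

theorem leftComb_append (t : T α) (as bs : List α) :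
    t.leftComb (as ++ bs) = (t.leftComb as).leftComb bs :=
  List.foldl_append

end T

theorem serial_append {α : Type*} (a : α) (as bs : List α) :
    serial a (as ++ bs) = (serial a as).leftComb bs :=
  T.leftComb_append (.leaf a) as bs

namespace R

open Relation

variable {α : Type*}

instance : Std.Symm (R (α := α)) where
  symm _ _ h := by
    induction h with
    | assocL x y z => exact assocR x y z
    | assocR x y z => exact assocL x y z
    | congL r _ ih => exact congL r ih
    | congR l _ ih => exact congR l ih

theorem reflTransGen_node_left {l l' : T α} (r : T α) (h : ReflTransGen R l l') :
    ReflTransGen R (.node l r) (.node l' r) :=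
  ReflTransGen.lift (T.node · r) (fun _ _ => congL r) _ _ h

theorem reflTransGen_leftComb_leaves (t s : T α) :
    ReflTransGen R (t.leftComb s.leaves) (.node t s) := by
  induction s generalizing t with
  | leaf _ => exact .refl
  | node l r ihl ihr =>
    rw [T.leaves, T.leftComb_append]
    calc
      ReflTransGen R ((t.leftComb l.leaves).leftComb r.leaves) (.node (t.leftComb l.leaves) r) :=
        ihr _
      ReflTransGen R _ (.node (.node t l) r) := reflTransGen_node_left r (ihl t)
      ReflTransGen R _ (.node t (.node l r)) := .single (assocL t l r)

theorem reflTransGen_serial {t : T α} {a : α} {as : List α} (h : t.leaves = a :: as) :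
    ReflTransGen R (serial a as) t := by
  induction t generalizing a as with
  | leaf b =>
    obtain ⟨rfl, rfl⟩ := List.cons.inj h
    exact .refl
  | node l r ihl _ =>
    obtain ⟨b, bs, hl⟩ := l.exists_leaves_eq_cons
    rw [T.leaves, hl, List.cons_append] at h
    obtain ⟨rfl, rfl⟩ := List.cons.inj h
    rw [serial_append]
    calc
      ReflTransGen R ((serial b bs).leftComb r.leaves) (.node (serial b bs) r) :=
        reflTransGen_leftComb_leaves _ r
      ReflTransGen R _ (.node l r) := reflTransGen_node_left r (ihl hl)

theorem reflTransGen_of_leaves_eq {s t : T α} (h : s.leaves = t.leaves) :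
    ReflTransGen R s t := by
  obtain ⟨a, as, hs⟩ := s.exists_leaves_eq_cons
  calc
    ReflTransGen R s (serial a as) := symm (reflTransGen_serial hs)
    ReflTransGen R _ t := reflTransGen_serial (h ▸ hs)

end R

theorem serial_reaches_and_connected {α : Type*} :
    (∀ (t : T α) (a : α) (as : List α), t.leaves = a :: as →
      Relation.ReflTransGen R (serial a as) t) ∧
    (∀ t₁ t₂ : T α, t₁.leaves = t₂.leaves →
      Relation.ReflTransGen R t₁ t₂) :=
  ⟨fun _ _ _ => R.reflTransGen_serial, fun _ _ => R.reflTransGen_of_leaves_eq⟩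
end
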